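/- arXiv:1010.4905 — 2 statements merged into one kernel-verified Lean document; each statement's English description precedes it below -/
import Mathlib

section
/- Let f be a harmonic mapping of the open unit disk U = {z ∈ ℂ : |z| < 1} into the open unit ball Bⁿ = {x ∈ ℝⁿ : |x| < 1}. Then at every point z ∈ U where the function z ↦ |f(z)| is differentiable, the gradient of |f| satisfies |∇|f|(z)| ≤ (4/π) · (1 - |f(z)|²)/(1 - |z|²). -/
open Complex Metric Real

/-!
Compose `f` with a norming functional `φ` of `f z`: the real harmonic function `φ ∘ f` is dominated
by `‖f‖`, with equality at `z`, so both have the same derivative at `z`. It therefore suffices to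
treat a harmonic `u : U → (-1, 1)`. Write `u = re F` with `F` holomorphic; then `exp (i π F / 2)`
has positive real part, and the Schwarz–Pick inequality for maps of the disk to the right half-plane
gives `|∇u(z)| ≤ (4 / π) cos (π u(z) / 2) / (1 - |z|²)`. Finally `cos (π x / 2) ≤ 1 - x²` on
`[-1, 1]`.
-/

open scoped ComplexConjugate Laplacian
open InnerProductSpace Set Filter Topology

theorem cos_pi_div_two_mul_le_one_sub_sq {x : ℝ} (hx : |x| ≤ 1) :
    Real.cos (π / 2 * x) ≤ 1 - x ^ 2 := by
  wlog hx_nonneg : 0 ≤ x generalizing x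
  · simpa using this (x := -x) (by rwa [abs_neg]) (by linarith)
  have hx_le : x ≤ 1 := (le_abs_self x).trans hx
  have sin_ge_chord : x * (√2 / 2) ≤ Real.sin (x * (π / 4)) := by
    simpa using strictConcaveOn_sin_Icc.concaveOn.2 (left_mem_Icc.2 pi_pos.le)
      (⟨by positivity, by linarith [pi_pos]⟩ : π / 4 ∈ Icc 0 π)
      (sub_nonneg.2 hx_le) hx_nonneg (by ring)
  calc Real.cos (π / 2 * x) = 1 - 2 * Real.sin (x * (π / 4)) ^ 2 := by
        rw [show π / 2 * x = 2 * (x * (π / 4)) by ring, Real.cos_two_mul, Real.cos_sq']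
        ring
    _ ≤ 1 - 2 * (x * (√2 / 2)) ^ 2 := by gcongr
    _ = 1 - x ^ 2 := by
        rw [mul_pow, div_pow, Real.sq_sqrt zero_le_two]
        ring

theorem norm_sub_lt_norm_add_conj {a w : ℂ} (ha : 0 < a.re) (hw : 0 < w.re) :
    ‖w - a‖ < ‖w + conj a‖ := by
  have sq_norm_diff : ‖w + conj a‖ ^ 2 - ‖w - a‖ ^ 2 = 4 * (a.re * w.re) := by
    simp only [← normSq_eq_norm_sq, normSq_apply, add_re, add_im, sub_re, sub_im, conj_re, conj_im]
    ring
  exact lt_of_pow_lt_pow_left₀ 2 (norm_nonneg _) (by linarith [mul_pos ha hw])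

theorem one_sub_sq_norm_pos {E : Type*} [SeminormedAddGroup E] {x : E} (hx : ‖x‖ < 1) :
    0 < 1 - ‖x‖ ^ 2 :=
  sub_pos.2 (pow_lt_one₀ (norm_nonneg x) hx two_ne_zero)

theorem norm_add_lt_norm_one_add_conj_mul {a w : ℂ} (ha : ‖a‖ < 1) (hw : ‖w‖ < 1) :
    ‖w + a‖ < ‖1 + conj a * w‖ := by
  have sq_norm_diff : ‖1 + conj a * w‖ ^ 2 - ‖w + a‖ ^ 2 = (1 - ‖a‖ ^ 2) * (1 - ‖w‖ ^ 2) := by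
    simp only [← normSq_eq_norm_sq, normSq_apply, add_re, add_im, mul_re, mul_im, conj_re, conj_im,
      one_re, one_im]
    ring
  exact lt_of_pow_lt_pow_left₀ 2 (norm_nonneg _)
    (by linarith [mul_pos (one_sub_sq_norm_pos ha) (one_sub_sq_norm_pos hw)])

theorem norm_deriv_le_two_mul_re_div_of_re_pos {G : ℂ → ℂ} {c : ℂ} {R : ℝ} (hR : 0 < R)
    (hG : DifferentiableOn ℂ G (ball c R)) (hG_re : ∀ w ∈ ball c R, 0 < (G w).re) :
    ‖deriv G c‖ ≤ 2 * (G c).re / R := by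
  have hc : c ∈ ball c R := mem_ball_self hR
  have norm_lt (w) (hw : w ∈ ball c R) : ‖G w - G c‖ < ‖G w + conj (G c)‖ :=
    norm_sub_lt_norm_add_conj (hG_re c hc) (hG_re w hw)
  have denom_ne (w) (hw : w ∈ ball c R) : G w + conj (G c) ≠ 0 :=
    norm_pos_iff.1 ((norm_nonneg _).trans_lt (norm_lt w hw))
  -- Compose with the Cayley transform that sends the right half-plane to the disk and `G c` to `0`.
  let H : ℂ → ℂ := fun w ↦ (G w - G c) / (G w + conj (G c))
  have hH : DifferentiableOn ℂ H (ball c R) :=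
    (hG.sub_const _).fun_div (hG.add_const _) denom_ne
  have hH_maps : MapsTo H (ball c R) (closedBall (H c) 1) := fun w hw ↦ by
    have : ‖H w‖ ≤ 1 := by
      rw [norm_div]
      exact div_le_one_of_le₀ (norm_lt w hw).le (norm_nonneg _)
    simpa [H] using this
  have hG_deriv : HasDerivAt G (deriv G c) c :=
    (hG.differentiableAt (isOpen_ball.mem_nhds hc)).hasDerivAt
  have hH_deriv : deriv H c = deriv G c / (2 * (G c).re : ℝ) := by
    rw [((hG_deriv.sub_const _).fun_div (hG_deriv.add_const _) (denom_ne c hc)).deriv, sub_self,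
      zero_mul, sub_zero, sq, mul_div_mul_right _ _ (denom_ne c hc), add_conj]
  have schwarz := norm_deriv_le_div_of_mapsTo_ball hH hH_maps hR
  have hre : 0 < 2 * (G c).re := mul_pos two_pos (hG_re c hc)
  rw [hH_deriv, norm_div, norm_real, Real.norm_of_nonneg hre.le, div_le_iff₀ hre] at schwarz
  rwa [one_div_mul_eq_div] at schwarz

/-- The automorphism `w ↦ (w + a) / (1 + conj a * w)` of the unit disk that moves `0` to `a`, as a
total function on `ℂ`; it moves the base point `a` of a Schwarz-type estimate to the center. -/
noncomputable def discShift (a w : ℂ) : ℂ := (w + a) / (1 + conj a * w)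

namespace discShift

variable {a w : ℂ}

theorem apply_zero (a : ℂ) : discShift a 0 = a := by
  simp [discShift]

theorem one_add_conj_mul_ne_zero (ha : ‖a‖ < 1) (hw : ‖w‖ < 1) : 1 + conj a * w ≠ 0 :=
  norm_pos_iff.1 ((norm_nonneg _).trans_lt (norm_add_lt_norm_one_add_conj_mul ha hw))

theorem mapsTo_ball (ha : ‖a‖ < 1) : MapsTo (discShift a) (ball 0 1) (ball 0 1) := fun w hw ↦ by
  rw [mem_ball_zero_iff] at hw ⊢
  rw [discShift, norm_div, div_lt_one (norm_pos_iff.2 (one_add_conj_mul_ne_zero ha hw))]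
  exact norm_add_lt_norm_one_add_conj_mul ha hw

theorem differentiableOn_ball (ha : ‖a‖ < 1) : DifferentiableOn ℂ (discShift a) (ball 0 1) :=
  (differentiableOn_id.add_const a).fun_div ((differentiableOn_id.const_mul _).const_add 1)
    fun _ hw ↦ one_add_conj_mul_ne_zero ha (mem_ball_zero_iff.1 hw)

theorem hasDerivAt_zero (a : ℂ) : HasDerivAt (discShift a) (1 - ‖a‖ ^ 2 : ℝ) 0 := by
  refine (((hasDerivAt_id (0 : ℂ)).add_const a).fun_div
    (((hasDerivAt_id (0 : ℂ)).const_mul (conj a)).const_add 1) (by simp)).congr_deriv ?_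
  simp [mul_conj']

end discShift

theorem norm_deriv_le_two_mul_re_div_one_sub_sq_of_re_pos {G : ℂ → ℂ} {z : ℂ}
    (hG : DifferentiableOn ℂ G (ball 0 1)) (hG_re : ∀ w ∈ ball (0 : ℂ) 1, 0 < (G w).re)
    (hz : z ∈ ball (0 : ℂ) 1) :
    ‖deriv G z‖ ≤ 2 * (G z).re / (1 - ‖z‖ ^ 2) := by
  have hz_norm : ‖z‖ < 1 := mem_ball_zero_iff.1 hz
  have hpos : 0 < 1 - ‖z‖ ^ 2 := one_sub_sq_norm_pos hz_norm
  have hmaps := discShift.mapsTo_ball hz_norm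
  have hderiv : deriv (G ∘ discShift z) 0 = deriv G z * (1 - ‖z‖ ^ 2 : ℝ) :=
    (HasDerivAt.comp_of_eq 0 (hG.differentiableAt (isOpen_ball.mem_nhds hz)).hasDerivAt
      (discShift.hasDerivAt_zero z) (discShift.apply_zero z).symm).deriv
  have center_bound := norm_deriv_le_two_mul_re_div_of_re_pos one_pos
    (hG.comp (discShift.differentiableOn_ball hz_norm) hmaps) fun w hw ↦ hG_re _ (hmaps hw)
  rw [hderiv, norm_mul, norm_real, Real.norm_of_nonneg hpos.le, Function.comp_apply,
    discShift.apply_zero, div_one] at center_bound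
  rwa [le_div_iff₀ hpos]

theorem norm_deriv_le_cos_of_abs_re_lt_one {F : ℂ → ℂ} {z : ℂ}
    (hF : DifferentiableOn ℂ F (ball 0 1)) (hF_re : ∀ w ∈ ball (0 : ℂ) 1, |(F w).re| < 1)
    (hz : z ∈ ball (0 : ℂ) 1) :
    ‖deriv F z‖ ≤ 4 / π * Real.cos (π / 2 * (F z).re) / (1 - ‖z‖ ^ 2) := by
  let k : ℂ := (π / 2 : ℝ) * I
  let G : ℂ → ℂ := fun w ↦ Complex.exp (k * F w)
  have hG_re (w) : (G w).re = ‖G w‖ * Real.cos (π / 2 * (F w).re) := by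
    simp [G, k, exp_re, norm_exp]
  have hG_re_pos (w) (hw : w ∈ ball (0 : ℂ) 1) : 0 < (G w).re := by
    obtain ⟨hlower, hupper⟩ := abs_lt.1 (hF_re w hw)
    rw [hG_re]
    exact mul_pos (norm_pos_iff.2 (Complex.exp_ne_zero _))
      (Real.cos_pos_of_mem_Ioo ⟨by nlinarith [pi_pos], by nlinarith [pi_pos]⟩)
  have hG_deriv : deriv G z = G z * (k * deriv F z) :=
    ((hF.differentiableAt (isOpen_ball.mem_nhds hz)).hasDerivAt.const_mul k).cexp.deriv
  have hk : ‖k‖ = π / 2 := by simp [k, abs_of_pos pi_pos]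
  have half_plane_bound : ‖G z‖ * (π / 2 * ‖deriv F z‖) ≤
      ‖G z‖ * (2 * Real.cos (π / 2 * (F z).re) / (1 - ‖z‖ ^ 2)) := by
    convert norm_deriv_le_two_mul_re_div_one_sub_sq_of_re_pos (hF.const_mul k).cexp hG_re_pos hz
      using 1
    · rw [hG_deriv, norm_mul, norm_mul, hk]
    · rw [hG_re]; ring
  have hcancel := le_of_mul_le_mul_left half_plane_bound (norm_pos_iff.2 (Complex.exp_ne_zero _))
  calc ‖deriv F z‖ = 2 / π * (π / 2 * ‖deriv F z‖) := by field_simp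
    _ ≤ 2 / π * (2 * Real.cos (π / 2 * (F z).re) / (1 - ‖z‖ ^ 2)) := by gcongr
    _ = 4 / π * Real.cos (π / 2 * (F z).re) / (1 - ‖z‖ ^ 2) := by ring

theorem norm_fderiv_re_le_norm_deriv {F : ℂ → ℂ} {z : ℂ} (hF : DifferentiableAt ℂ F z) :
    ‖fderiv ℝ (fun w ↦ (F w).re) z‖ ≤ ‖deriv F z‖ := by
  have hre : HasFDerivAt (fun w ↦ (F w).re) (reCLM ∘L (fderiv ℂ F z).restrictScalars ℝ) z :=
    reCLM.hasFDerivAt.comp z (hF.hasFDerivAt.restrictScalars ℝ)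
  rw [hre.fderiv, norm_deriv_eq_norm_fderiv]
  simpa using reCLM.opNorm_comp_le ((fderiv ℂ F z).restrictScalars ℝ)

theorem norm_fderiv_le_cos_of_harmonicOnNhd {u : ℂ → ℝ} {z : ℂ}
    (hu : HarmonicOnNhd u (ball 0 1)) (hu_abs : ∀ w ∈ ball (0 : ℂ) 1, |u w| < 1)
    (hz : z ∈ ball (0 : ℂ) 1) :
    ‖fderiv ℝ u z‖ ≤ 4 / π * Real.cos (π / 2 * u z) / (1 - ‖z‖ ^ 2) := by
  obtain ⟨F, hF, hF_re⟩ := hu.exists_analyticOnNhd_ball_re_eq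
  have hre_eventually : (fun w ↦ (F w).re) =ᶠ[𝓝 z] u :=
    hF_re.eventuallyEq_of_mem (isOpen_ball.mem_nhds hz)
  rw [← hre_eventually.fderiv_eq, ← hF_re hz]
  exact (norm_fderiv_re_le_norm_deriv (hF z hz).differentiableAt).trans
    (norm_deriv_le_cos_of_abs_re_lt_one hF.differentiableOn
      (fun w hw ↦ (congrArg abs (hF_re hw)).trans_lt (hu_abs w hw)) hz)

theorem fderiv_eq_of_eventuallyLE {E : Type*} [NormedAddCommGroup E] [NormedSpace ℝ E]
    {u v : E → ℝ} {x : E} (hle : u ≤ᶠ[𝓝 x] v) (heq : u x = v x)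
    (hu : DifferentiableAt ℝ u x) (hv : DifferentiableAt ℝ v x) :
    fderiv ℝ u x = fderiv ℝ v x := by
  have hmin : IsLocalMin (v - u) x := hle.mono fun y hy ↦ by
    simpa [heq] using hy
  exact (sub_eq_zero.1 (hmin.hasFDerivAt_eq_zero (hv.hasFDerivAt.sub hu.hasFDerivAt))).symm

section NormedTarget

variable {E : Type*} [NormedAddCommGroup E] [NormedSpace ℝ E] {f : ℂ → E} {z : ℂ}

theorem norm_fderiv_norm_le_cos_of_harmonicOnNhd (hf : HarmonicOnNhd f (ball 0 1))
    (hf_norm : ∀ w ∈ ball (0 : ℂ) 1, ‖f w‖ < 1) (hz : z ∈ ball (0 : ℂ) 1)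
    (hd : DifferentiableAt ℝ (fun w ↦ ‖f w‖) z) :
    ‖fderiv ℝ (fun w ↦ ‖f w‖) z‖ ≤ 4 / π * Real.cos (π / 2 * ‖f z‖) / (1 - ‖z‖ ^ 2) := by
  obtain ⟨φ, hφ_norm, hφz : φ (f z) = ‖f z‖⟩ := exists_dual_vector'' ℝ (f z)
  have hφ_abs (w) : |φ (f w)| ≤ ‖f w‖ := by
    simpa using φ.le_of_opNorm_le hφ_norm (f w)
  have hu : HarmonicOnNhd (φ ∘ f) (ball 0 1) := hf.comp_CLM φ
  have hfderiv : fderiv ℝ (φ ∘ f) z = fderiv ℝ (fun w ↦ ‖f w‖) z :=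
    fderiv_eq_of_eventuallyLE (.of_forall fun w ↦ (le_abs_self _).trans (hφ_abs w)) hφz
      ((hu z hz).1.differentiableAt two_ne_zero) hd
  rw [← hfderiv, ← hφz]
  exact norm_fderiv_le_cos_of_harmonicOnNhd hu (fun w hw ↦ (hφ_abs w).trans_lt (hf_norm w hw)) hz

theorem grad_norm_bound_harmonic_map_general (hf : HarmonicOnNhd f (ball 0 1))
    (hf_norm : ∀ w ∈ ball (0 : ℂ) 1, ‖f w‖ < 1) (hz : z ∈ ball (0 : ℂ) 1)
    (hd : DifferentiableAt ℝ (fun w ↦ ‖f w‖) z) :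
    ‖gradient (fun w ↦ ‖f w‖) z‖ ≤ 4 / π * (1 - ‖f z‖ ^ 2) / (1 - ‖z‖ ^ 2) := by
  have hpos : 0 < 1 - ‖z‖ ^ 2 := one_sub_sq_norm_pos (mem_ball_zero_iff.1 hz)
  calc ‖gradient (fun w ↦ ‖f w‖) z‖ = ‖fderiv ℝ (fun w ↦ ‖f w‖) z‖ := by
        rw [← toDual_gradient, LinearIsometryEquiv.norm_map]
    _ ≤ 4 / π * Real.cos (π / 2 * ‖f z‖) / (1 - ‖z‖ ^ 2) :=
        norm_fderiv_norm_le_cos_of_harmonicOnNhd hf hf_norm hz hd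
    _ ≤ 4 / π * (1 - ‖f z‖ ^ 2) / (1 - ‖z‖ ^ 2) := by
        gcongr
        exact cos_pi_div_two_mul_le_one_sub_sq ((abs_norm _).trans_le (hf_norm z hz).le)

end NormedTarget

theorem laplacian_eq_fderiv_fderiv_one_add_I {E : Type*} [NormedAddCommGroup E] [NormedSpace ℝ E]
    {f : ℂ → E} {z : ℂ} (hf : ContDiffAt ℝ 2 f z) :
    Δ f z = fderiv ℝ (fun w ↦ fderiv ℝ f w 1) z 1 + fderiv ℝ (fun w ↦ fderiv ℝ f w I) z I := by
  have hdiff : DifferentiableAt ℝ (fderiv ℝ f) z :=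
    (hf.fderiv_right (m := 1) le_rfl).differentiableAt one_ne_zero
  have second_deriv (v : ℂ) :
      fderiv ℝ (fun w ↦ fderiv ℝ f w v) z v = iteratedFDeriv ℝ 2 f z ![v, v] := by
    simp [fderiv_clm_apply hdiff (differentiableAt_const v), iteratedFDeriv_two_apply]
  rw [second_deriv, second_deriv, laplacian_eq_iteratedFDeriv_complexPlane]

theorem harmonicOnNhd_of_fderiv_fderiv_one_add_I_eq_zero {E : Type*} [NormedAddCommGroup E]
    [NormedSpace ℝ E] {f : ℂ → E} {s : Set ℂ} (hs : IsOpen s) (hf : ContDiffOn ℝ 2 f s)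
    (hf_harm : ∀ z ∈ s,
      fderiv ℝ (fun w ↦ fderiv ℝ f w 1) z 1 + fderiv ℝ (fun w ↦ fderiv ℝ f w I) z I = 0) :
    HarmonicOnNhd f s := by
  have hf_at (z) (hz : z ∈ s) : ContDiffAt ℝ 2 f z := hf.contDiffAt (hs.mem_nhds hz)
  refine fun z hz ↦ ⟨hf_at z hz, ?_⟩
  filter_upwards [hs.mem_nhds hz] with w hw
  exact (laplacian_eq_fderiv_fderiv_one_add_I (hf_at w hw)).trans (hf_harm w hw)

theorem harmonicAt_euclidean {E ι : Type*} [NormedAddCommGroup E] [InnerProductSpace ℝ E]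
    [FiniteDimensional ℝ E] [Fintype ι] {f : E → EuclideanSpace ℝ ι} {x : E} :
    HarmonicAt f x ↔ ∀ i, HarmonicAt (fun y ↦ f y i) x := by
  refine ⟨fun hf i ↦ hf.comp_CLM (EuclideanSpace.proj i), fun hf ↦ ?_⟩
  have hf_smooth : ContDiffAt ℝ 2 f x := contDiffAt_euclidean.2 fun i ↦ (hf i).1
  have laplacian_coord (i) : Δ (fun y ↦ f y i) =ᶠ[𝓝 x] fun y ↦ Δ f y i :=
    hf_smooth.laplacian_CLM_comp_left_nhds (l := EuclideanSpace.proj i)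
  have laplacian_coord_eq_zero : ∀ᶠ y in 𝓝 x, ∀ i, Δ f y i = 0 :=
    eventually_all.2 fun i ↦ (laplacian_coord i).symm.trans (hf i).2
  exact ⟨hf_smooth, laplacian_coord_eq_zero.mono fun y hy ↦ PiLp.ext hy⟩

/-- **Schwarz-type gradient bound for the norm of a vector-valued harmonic mapping**
(Kalaj–Vuorinen, Theorem 2). If `f` is a harmonic mapping of the unit disk into
the unit ball of `ℝⁿ`, then wherever `z ↦ |f(z)|` is differentiable,
`|∇|f|(z)| ≤ (4/π) (1 - |f(z)|²)/(1 - |z|²)`. -/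
theorem grad_norm_bound_harmonic_map
    (n : ℕ) (f : ℂ → EuclideanSpace ℝ (Fin n))
    (hf_smooth : ContDiffOn ℝ 2 f (ball (0 : ℂ) 1))
    (hf_harm : ∀ i : Fin n, ∀ z ∈ ball (0 : ℂ) 1,
      fderiv ℝ (fun w => fderiv ℝ (fun u => f u i) w 1) z 1
        + fderiv ℝ (fun w => fderiv ℝ (fun u => f u i) w Complex.I) z Complex.I = 0)
    (hf_range : ∀ z ∈ ball (0 : ℂ) 1, ‖f z‖ < 1) :
    ∀ z ∈ ball (0 : ℂ) 1, DifferentiableAt ℝ (fun w => ‖f w‖) z →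
      ‖gradient (fun w => ‖f w‖) z‖ ≤ (4 / π) * (1 - ‖f z‖ ^ 2) / (1 - ‖z‖ ^ 2) :=
  fun _ hz ↦ grad_norm_bound_harmonic_map_general (fun w hw ↦ harmonicAt_euclidean.2 fun i ↦
    harmonicOnNhd_of_fderiv_fderiv_one_add_I_eq_zero isOpen_ball
      (contDiffOn_euclidean.1 hf_smooth i) (hf_harm i) w hw) hf_range hz
end

section
/- Let f be a harmonic function of the open unit disk U = {z ∈ ℂ : |z| < 1} into the open interval (-1, 1). Then for all z, w ∈ U, |artanh(f(z)) - artanh(f(w))| ≤ (4/π) · artanh(|z - w| / |1 - z·conj(w)|). In other words, f decreases hyperbolic distances up to the factor 4/π, where the hyperbolic distance on (-1,1) is d_h(x,y) = |artanh x - artanh y| and the hyperbolic distance on U is d_h(z,w) = artanh(|z - w|/|1 - z·conj(w)|). -/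
open Complex Metric Real

/-- The inverse hyperbolic tangent, `artanh t = (1/2) log ((1+t)/(1-t))`. -/
noncomputable def artanh (t : ℝ) : ℝ := (1 / 2) * Real.log ((1 + t) / (1 - t))

/-!
Write `f = Re F` with `F` holomorphic. The complex tangent maps the strip `|Re ζ| < π/4` into the
unit disk, so the Schwarz–Pick lemma applies to `tan (π F / 4)`. In the strip, replacing two points
by their real parts does not increase their hyperbolic distance, which gives the sharp estimate
`|artanh (tan (π f(z) / 4)) - artanh (tan (π f(w) / 4))| ≤ d_h(z, w)`. Finally `artanh x` varies
more slowly than `(4/π) artanh (tan (π x / 4))`: their derivatives are `1 / (1 - x²)` and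
`1 / cos (π x / 2)`, and `cos (π x / 2) ≤ 1 - x²` on `[-1, 1]`.
-/

open Set InnerProductSpace
open scoped ComplexConjugate

section InverseHyperbolicTangent

variable {x y : ℝ}

lemma hasDerivAt_artanh (hx : x ∈ Ioo (-1) 1) :
    HasDerivAt Real.artanh (1 / (1 - x ^ 2)) x := by
  have one_add_ne : 1 + x ≠ 0 := by linarith [hx.1]
  have one_sub_ne : 1 - x ≠ 0 := by linarith [hx.2]
  have hlog := ((((hasDerivAt_id x).const_add 1).div ((hasDerivAt_id x).const_sub 1)
    one_sub_ne).log (div_ne_zero one_add_ne one_sub_ne)).const_mul (1 / 2 : ℝ)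
  have hartanh := hlog.congr_of_eventuallyEq (f₁ := Real.artanh) <| by
    filter_upwards [Icc_mem_nhds hx.1 hx.2] with t ht using Real.artanh_eq_half_log ht
  refine hartanh.congr_deriv ?_
  rw [show 1 - x ^ 2 = (1 - x) * (1 + x) by ring]
  simp only [id, Pi.div_apply]
  field_simp
  ring

lemma sub_div_one_sub_mul_mem_Ioo (hx : x ∈ Ioo (-1) 1) (hy : y ∈ Ioo (-1) 1) :
    (x - y) / (1 - x * y) ∈ Ioo (-1 : ℝ) 1 := by
  obtain ⟨⟨hx₁, hx₂⟩, hy₁, hy₂⟩ := hx, hy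
  have hpos : 0 < 1 - x * y := by nlinarith
  rw [mem_Ioo, lt_div_iff₀ hpos, div_lt_one hpos]
  constructor <;> nlinarith

lemma artanh_sub_artanh (hx : x ∈ Ioo (-1) 1) (hy : y ∈ Ioo (-1) 1) :
    Real.artanh x - Real.artanh y = Real.artanh ((x - y) / (1 - x * y)) := by
  have hxy := sub_div_one_sub_mul_mem_Ioo hx hy
  obtain ⟨hx₁, hx₂⟩ := hx
  obtain ⟨hy₁, hy₂⟩ := hy
  have one_sub_mul_pos : 0 < 1 - x * y := by nlinarith
  have hratio : (1 + x) / (1 - x) / ((1 + y) / (1 - y)) =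
      (1 + (x - y) / (1 - x * y)) / (1 - (x - y) / (1 - x * y)) := by
    have hadd : 1 + (x - y) / (1 - x * y) = (1 + x) * (1 - y) / (1 - x * y) := by
      field_simp
      ring
    have hsub : 1 - (x - y) / (1 - x * y) = (1 - x) * (1 + y) / (1 - x * y) := by
      field_simp
      ring
    rw [hadd, hsub, div_div_div_cancel_right₀ one_sub_mul_pos.ne', div_div_div_eq]
  rw [Real.artanh_eq_half_log ⟨hx₁.le, hx₂.le⟩, Real.artanh_eq_half_log ⟨hy₁.le, hy₂.le⟩,
    Real.artanh_eq_half_log (Ioo_subset_Icc_self hxy), ← mul_sub,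
    ← Real.log_div (div_pos (by linarith) (by linarith)).ne'
      (div_pos (by linarith) (by linarith)).ne', hratio]

lemma artanh_abs (x : ℝ) : Real.artanh |x| = |Real.artanh x| := by
  have artanh_neg : Real.artanh (-x) = -Real.artanh x := by
    rw [Real.artanh, Real.artanh, ← Real.log_inv, ← Real.sqrt_inv, inv_div, sub_neg_eq_add,
      ← sub_eq_add_neg]
  rcases le_total 0 x with h | h
  · rw [abs_of_nonneg h, abs_of_nonneg (Real.artanh_nonneg h)]
  · rw [abs_of_nonpos h, abs_of_nonpos (Real.artanh_nonpos h), artanh_neg]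

end InverseHyperbolicTangent

section PseudohyperbolicDistance

variable {z w : ℂ}

/-- The pseudohyperbolic distance `ρ` on the unit disk; the hyperbolic distance is `artanh ρ`.
Outside the disk the denominator may vanish, and the value is then `0`. -/
noncomputable def pseudohyperbolicDist (z w : ℂ) : ℝ :=
  ‖z - w‖ / ‖1 - z * conj w‖

/-- The hyperbolic translation of the unit disk that moves `0` to `w`. Its inverse is the
translation by `-w`, so these maps move the base point of the Schwarz lemma. -/
noncomputable def diskTranslation (w z : ℂ) : ℂ :=
  (z + w) / (1 + conj w * z)

lemma diskTranslation_zero_right (w : ℂ) : diskTranslation w 0 = w := by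
  simp [diskTranslation]

lemma diskTranslation_neg_self (w : ℂ) : diskTranslation (-w) w = 0 := by
  simp [diskTranslation]

lemma norm_diskTranslation_neg (w z : ℂ) :
    ‖diskTranslation (-w) z‖ = pseudohyperbolicDist z w := by
  rw [diskTranslation, pseudohyperbolicDist, norm_div, map_neg, neg_mul, ← sub_eq_add_neg,
    ← sub_eq_add_neg, mul_comm]

lemma one_add_conj_mul_ne_zero (hw : ‖w‖ < 1) (hz : ‖z‖ < 1) : 1 + conj w * z ≠ 0 := by
  refine Complex.slitPlane_ne_zero (Complex.mem_slitPlane_of_norm_lt_one ?_)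
  rw [norm_mul, RCLike.norm_conj]
  exact mul_lt_one_of_nonneg_of_lt_one_left (norm_nonneg w) hw hz.le

lemma sq_norm_one_add_conj_mul_sub_sq_norm_add (w z : ℂ) :
    ‖1 + conj w * z‖ ^ 2 - ‖z + w‖ ^ 2 = (1 - ‖w‖ ^ 2) * (1 - ‖z‖ ^ 2) := by
  simp only [Complex.sq_norm, Complex.normSq_apply, Complex.add_re, Complex.add_im,
    Complex.mul_re, Complex.mul_im, Complex.one_re, Complex.one_im, Complex.conj_re,
    Complex.conj_im]
  ring

lemma mapsTo_diskTranslation (hw : ‖w‖ < 1) :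
    MapsTo (diskTranslation w) (ball 0 1) (ball 0 1) := by
  intro z hz
  rw [mem_ball_zero_iff] at hz ⊢
  rw [diskTranslation, norm_div, div_lt_one (norm_pos_iff.2 (one_add_conj_mul_ne_zero hw hz)),
    ← sq_lt_sq₀ (norm_nonneg _) (norm_nonneg _), ← sub_pos,
    sq_norm_one_add_conj_mul_sub_sq_norm_add]
  have hw_sq : ‖w‖ ^ 2 < 1 := pow_lt_one₀ (norm_nonneg w) hw two_ne_zero
  have hz_sq : ‖z‖ ^ 2 < 1 := pow_lt_one₀ (norm_nonneg z) hz two_ne_zero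
  exact mul_pos (sub_pos.2 hw_sq) (sub_pos.2 hz_sq)

lemma pseudohyperbolicDist_mem_Ico (hz : ‖z‖ < 1) (hw : ‖w‖ < 1) :
    pseudohyperbolicDist z w ∈ Ico (0 : ℝ) 1 := by
  rw [← norm_diskTranslation_neg, mem_Ico, ← mem_ball_zero_iff]
  exact ⟨norm_nonneg _,
    mapsTo_diskTranslation (by rwa [norm_neg]) (mem_ball_zero_iff.2 hz)⟩

lemma differentiableOn_diskTranslation (hw : ‖w‖ < 1) :
    DifferentiableOn ℂ (diskTranslation w) (ball 0 1) :=
  DifferentiableOn.div (by fun_prop) (by fun_prop) fun _ hz ↦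
    one_add_conj_mul_ne_zero hw (mem_ball_zero_iff.1 hz)

lemma diskTranslation_diskTranslation_neg (hw : ‖w‖ < 1) (hz : ‖z‖ < 1) :
    diskTranslation w (diskTranslation (-w) z) = z := by
  have hden : 1 - conj w * z ≠ 0 := by
    simpa [sub_eq_add_neg] using one_add_conj_mul_ne_zero (w := -w) (by rwa [norm_neg]) hz
  have hden_self : 1 - conj w * w ≠ 0 := by
    simpa [sub_eq_add_neg] using one_add_conj_mul_ne_zero (w := -w) (by rwa [norm_neg]) hw
  have hnum_eq : (z - w) / (1 - conj w * z) + w = z * (1 - conj w * w) / (1 - conj w * z) := by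
    rw [div_add' _ _ _ hden]
    ring
  have hden_eq : 1 + conj w * ((z - w) / (1 - conj w * z)) =
      (1 - conj w * w) / (1 - conj w * z) := by
    field_simp
    ring
  simp only [diskTranslation, map_neg, neg_mul, ← sub_eq_add_neg]
  rw [hnum_eq, hden_eq, div_div_div_cancel_right₀ hden, mul_div_cancel_right₀ _ hden_self]

/-- The **Schwarz–Pick lemma**. -/
theorem pseudohyperbolicDist_le_of_mapsTo_ball {f : ℂ → ℂ}
    (hf : DifferentiableOn ℂ f (ball 0 1)) (hmaps : MapsTo f (ball 0 1) (ball 0 1))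
    (hz : z ∈ ball (0 : ℂ) 1) (hw : w ∈ ball (0 : ℂ) 1) :
    pseudohyperbolicDist (f z) (f w) ≤ pseudohyperbolicDist z w := by
  have hw' : ‖w‖ < 1 := mem_ball_zero_iff.1 hw
  have hfw : ‖-f w‖ < 1 := by simpa using hmaps hw
  have hmaps_w : MapsTo (diskTranslation w) (ball 0 1) (ball 0 1) := mapsTo_diskTranslation hw'
  have hzw : ‖diskTranslation (-w) z‖ < 1 :=
    mem_ball_zero_iff.1 (mapsTo_diskTranslation (by rwa [norm_neg]) hz)
  have hschwarz := Complex.norm_le_norm_of_mapsTo_ball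
    (f := diskTranslation (-f w) ∘ f ∘ diskTranslation w)
    ((differentiableOn_diskTranslation hfw).comp
      (hf.comp (differentiableOn_diskTranslation hw') hmaps_w) (hmaps.comp hmaps_w))
    (((mapsTo_diskTranslation hfw).comp (hmaps.comp hmaps_w)).mono_right ball_subset_closedBall)
    (by simp only [Function.comp_apply, diskTranslation_zero_right, diskTranslation_neg_self])
    hzw
  simpa only [Function.comp_apply, norm_diskTranslation_neg,
    diskTranslation_diskTranslation_neg hw' (mem_ball_zero_iff.1 hz)] using hschwarz

lemma abs_artanh_sub_artanh {x y : ℝ} (hx : x ∈ Ioo (-1) 1) (hy : y ∈ Ioo (-1) 1) :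
    |Real.artanh x - Real.artanh y| = Real.artanh (pseudohyperbolicDist x y) := by
  rw [artanh_sub_artanh hx hy, ← artanh_abs,
    pseudohyperbolicDist, Complex.conj_ofReal]
  norm_cast
  rw [abs_div, Real.norm_eq_abs, Real.norm_eq_abs]

end PseudohyperbolicDistance

section TangentOnStrip

lemma sq_norm_sin (z : ℂ) : ‖Complex.sin z‖ ^ 2 = Real.sin z.re ^ 2 + Real.sinh z.im ^ 2 := by
  have hsin : Complex.sin z = ⟨Real.sin z.re * Real.cosh z.im, Real.cos z.re * Real.sinh z.im⟩ := by
    rw [Complex.sin_eq]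
    apply Complex.ext <;> simp [← Complex.ofReal_sin, ← Complex.ofReal_cos,
      ← Complex.ofReal_cosh, ← Complex.ofReal_sinh]
  rw [hsin, Complex.sq_norm, Complex.normSq_mk]
  linear_combination Real.sin z.re ^ 2 * Real.cosh_sq z.im +
    Real.sinh z.im ^ 2 * Real.sin_sq_add_cos_sq z.re

lemma sq_norm_cos (z : ℂ) : ‖Complex.cos z‖ ^ 2 = Real.cos z.re ^ 2 + Real.sinh z.im ^ 2 := by
  have hsin := sq_norm_sin (π / 2 - z)
  rw [Complex.sin_pi_div_two_sub] at hsin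
  simpa [Real.sin_pi_div_two_sub] using hsin

variable {z w : ℂ}

lemma cos_ne_zero_of_abs_re_lt (hz : |z.re| < π / 2) : Complex.cos z ≠ 0 := by
  have hcos : 0 < Real.cos z.re := Real.cos_pos_of_mem_Ioo (abs_lt.1 hz)
  have hsq : 0 < ‖Complex.cos z‖ ^ 2 := by
    rw [sq_norm_cos]
    positivity
  exact norm_ne_zero_iff.1 (pow_ne_zero_iff two_ne_zero |>.1 hsq.ne')

lemma cos_two_mul_pos_of_abs_lt {x : ℝ} (hx : |x| < π / 4) : 0 < Real.cos (2 * x) := by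
  obtain ⟨hx₁, hx₂⟩ := abs_lt.1 hx
  exact Real.cos_pos_of_mem_Ioo ⟨by linarith, by linarith⟩

lemma norm_tan_lt_one (hz : |z.re| < π / 4) : ‖Complex.tan z‖ < 1 := by
  have hcos : Complex.cos z ≠ 0 := cos_ne_zero_of_abs_re_lt (by linarith [Real.pi_pos])
  have hre : Real.sin z.re ^ 2 < Real.cos z.re ^ 2 := by
    have := cos_two_mul_pos_of_abs_lt hz
    rwa [Real.cos_two_mul', sub_pos] at this
  rw [Complex.tan, norm_div, div_lt_one (norm_pos_iff.2 hcos),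
    ← sq_lt_sq₀ (norm_nonneg _) (norm_nonneg _), sq_norm_sin, sq_norm_cos]
  gcongr

lemma tan_mem_Ioo_neg_one_one {x : ℝ} (hx : |x| < π / 4) : Real.tan x ∈ Ioo (-1 : ℝ) 1 := by
  have hnorm : ‖Complex.tan x‖ < 1 := norm_tan_lt_one hx
  rwa [← Complex.ofReal_tan, Complex.norm_real, Real.norm_eq_abs, abs_lt] at hnorm

lemma pseudohyperbolicDist_tan (hz : Complex.cos z ≠ 0) (hw : Complex.cos w ≠ 0) :
    pseudohyperbolicDist (Complex.tan z) (Complex.tan w) =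
      ‖Complex.sin (z - w)‖ / ‖Complex.cos (z + conj w)‖ := by
  have hw_conj : Complex.cos (conj w) ≠ 0 := by
    rwa [Complex.cos_conj, map_ne_zero]
  have hnum : Complex.tan z - Complex.tan w =
      Complex.sin (z - w) / (Complex.cos z * Complex.cos w) := by
    rw [Complex.tan, Complex.tan, Complex.sin_sub, div_sub_div _ _ hz hw]
  have hden : 1 - Complex.tan z * conj (Complex.tan w) =
      Complex.cos (z + conj w) / (Complex.cos z * Complex.cos (conj w)) := by
    rw [← Complex.tan_conj, Complex.tan, Complex.tan, Complex.cos_add, div_mul_div_comm,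
      one_sub_div (mul_ne_zero hz hw_conj)]
  have hnorm : ‖Complex.cos z * Complex.cos (conj w)‖ = ‖Complex.cos z * Complex.cos w‖ := by
    rw [Complex.cos_conj, norm_mul, norm_mul, RCLike.norm_conj]
  rw [pseudohyperbolicDist, hnum, hden, norm_div, norm_div, hnorm,
    div_div_div_cancel_right₀ (norm_ne_zero_iff.2 (mul_ne_zero hz hw))]

lemma cos_add_sq_sub_sin_sub_sq (x y : ℝ) :
    Real.cos (x + y) ^ 2 - Real.sin (x - y) ^ 2 = Real.cos (2 * x) * Real.cos (2 * y) := by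
  rw [Real.cos_add, Real.sin_sub, Real.cos_two_mul', Real.cos_two_mul']
  ring

lemma pseudohyperbolicDist_tan_re_le (hz : |z.re| < π / 4) (hw : |w.re| < π / 4) :
    pseudohyperbolicDist (Complex.tan z.re) (Complex.tan w.re) ≤
      pseudohyperbolicDist (Complex.tan z) (Complex.tan w) := by
  have hpi := Real.pi_pos
  have hsin_lt_cos : Real.sin (z.re - w.re) ^ 2 < Real.cos (z.re + w.re) ^ 2 := by
    rw [← sub_pos, cos_add_sq_sub_sin_sub_sq]
    exact mul_pos (cos_two_mul_pos_of_abs_lt hz) (cos_two_mul_pos_of_abs_lt hw)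
  have hcos : 0 < Real.cos (z.re + w.re) ^ 2 := (sq_nonneg _).trans_lt hsin_lt_cos
  -- `z - w` and `z + conj w` have the same imaginary part, so passing from the real parts to
  -- `z` and `w` adds the same `sinh²` to the numerator and denominator of the squared distance.
  rw [pseudohyperbolicDist_tan (cos_ne_zero_of_abs_re_lt (by simpa using by linarith))
      (cos_ne_zero_of_abs_re_lt (by simpa using by linarith)),
    pseudohyperbolicDist_tan (cos_ne_zero_of_abs_re_lt (by linarith))
      (cos_ne_zero_of_abs_re_lt (by linarith)),
    ← sq_le_sq₀ (by positivity) (by positivity)]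
  simp only [div_pow, sq_norm_sin, sq_norm_cos, Complex.sub_re, Complex.sub_im, Complex.add_re,
    Complex.add_im, Complex.conj_re, Complex.conj_im, Complex.ofReal_re, Complex.ofReal_im,
    ← sub_eq_add_neg, sub_zero, Real.sinh_zero, zero_pow two_ne_zero, add_zero]
  rw [div_le_div_iff₀ hcos (by positivity)]
  linarith [mul_le_mul_of_nonneg_right hsin_lt_cos.le (sq_nonneg (Real.sinh (z.im - w.im)))]

end TangentOnStrip

section ArtanhComparison

variable {x y : ℝ}

lemma hasDerivAt_artanh_tan (hx : |x| < π / 4) :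
    HasDerivAt (fun t ↦ Real.artanh (Real.tan t)) (1 / Real.cos (2 * x)) x := by
  have hcos : Real.cos x ≠ 0 :=
    (Real.cos_pos_of_mem_Ioo (abs_lt.1 (by linarith [Real.pi_pos]))).ne'
  refine ((hasDerivAt_artanh (tan_mem_Ioo_neg_one_one hx)).comp x
    (Real.hasDerivAt_tan hcos)).congr_deriv ?_
  rw [Real.cos_two_mul', Real.tan_eq_sin_div_cos, div_pow, one_sub_div (pow_ne_zero 2 hcos),
    one_div_div, div_mul_div_cancel₀' (pow_ne_zero 2 hcos)]

lemma cos_pi_div_two_mul_le (hx : |x| ≤ 1) : Real.cos (π / 2 * x) ≤ 1 - x ^ 2 := by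
  wlog hx_nonneg : 0 ≤ x generalizing x
  · simpa using this (x := -x) (by rwa [abs_neg]) (by linarith)
  have hpi := Real.pi_pos
  have sin_ge_chord : x * (√2 / 2) ≤ Real.sin (x * (π / 4)) := by
    simpa using strictConcaveOn_sin_Icc.concaveOn.2
      (left_mem_Icc.2 hpi.le) (show π / 4 ∈ Icc 0 π from ⟨by linarith, by linarith⟩)
      (sub_nonneg.2 (le_of_abs_le hx)) hx_nonneg (sub_add_cancel 1 x)
  calc Real.cos (π / 2 * x) = Real.cos (2 * (x * (π / 4))) := by ring_nf
    _ = 1 - 2 * Real.sin (x * (π / 4)) ^ 2 := Real.cos_two_mul_eq_one_sub _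
    _ ≤ 1 - 2 * (x * (√2 / 2)) ^ 2 := by gcongr
    _ = 1 - x ^ 2 := by
      rw [mul_pow, div_pow, Real.sq_sqrt zero_le_two]
      ring

lemma abs_pi_div_four_mul_lt (hx : x ∈ Ioo (-1) 1) : |π / 4 * x| < π / 4 := by
  rw [abs_mul, abs_of_pos (by positivity)]
  exact mul_lt_of_lt_one_right (by positivity) (abs_lt.2 hx)

lemma hasDerivAt_artanh_tan_sub_artanh (hx : x ∈ Ioo (-1) 1) :
    HasDerivAt (fun t ↦ 4 / π * Real.artanh (Real.tan (π / 4 * t)) - Real.artanh t)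
      (1 / Real.cos (π / 2 * x) - 1 / (1 - x ^ 2)) x := by
  refine ((((hasDerivAt_artanh_tan (abs_pi_div_four_mul_lt hx)).comp x
    ((hasDerivAt_id x).const_mul (π / 4))).const_mul (4 / π)).sub
    (hasDerivAt_artanh hx)).congr_deriv ?_
  rw [show 2 * (π / 4 * x) = π / 2 * x by ring]
  field_simp

lemma monotoneOn_artanh_tan_sub_artanh :
    MonotoneOn (fun t ↦ 4 / π * Real.artanh (Real.tan (π / 4 * t)) - Real.artanh t)
      (Ioo (-1) 1) := by
  refine monotoneOn_of_hasDerivWithinAt_nonneg (convex_Ioo _ _)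
    (fun x hx ↦ (hasDerivAt_artanh_tan_sub_artanh hx).continuousAt.continuousWithinAt)
    (fun x hx ↦ (hasDerivAt_artanh_tan_sub_artanh (interior_subset hx)).hasDerivWithinAt)
    fun x hx ↦ ?_
  rw [interior_Ioo] at hx
  have hcos : 0 < Real.cos (π / 2 * x) := by
    rw [show π / 2 * x = 2 * (π / 4 * x) by ring]
    exact cos_two_mul_pos_of_abs_lt (abs_pi_div_four_mul_lt hx)
  exact sub_nonneg.2 (one_div_le_one_div_of_le hcos (cos_pi_div_two_mul_le (abs_lt.2 hx).le))

lemma abs_artanh_sub_artanh_le (hx : x ∈ Ioo (-1) 1) (hy : y ∈ Ioo (-1) 1) :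
    |Real.artanh x - Real.artanh y| ≤
      4 / π * |Real.artanh (Real.tan (π / 4 * x)) - Real.artanh (Real.tan (π / 4 * y))| := by
  wlog hyx : y ≤ x generalizing x y
  · rw [abs_sub_comm, abs_sub_comm (Real.artanh (Real.tan _))]
    exact this hy hx (le_of_not_ge hyx)
  have hmono := monotoneOn_artanh_tan_sub_artanh hy hx hyx
  calc |Real.artanh x - Real.artanh y|
      = Real.artanh x - Real.artanh y :=
        abs_of_nonneg (sub_nonneg.2 (Real.strictMonoOn_artanh.monotoneOn hy hx hyx))
    _ ≤ 4 / π * (Real.artanh (Real.tan (π / 4 * x)) - Real.artanh (Real.tan (π / 4 * y))) := by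
        linarith
    _ ≤ _ := by
        gcongr
        exact le_abs_self _

end ArtanhComparison

section SchwarzPick

variable {z w : ℂ}

theorem abs_artanh_tan_re_sub_artanh_tan_re_le {F : ℂ → ℂ} (hF : DifferentiableOn ℂ F (ball 0 1))
    (hre : ∀ z ∈ ball (0 : ℂ) 1, |(F z).re| < π / 4) (hz : z ∈ ball (0 : ℂ) 1)
    (hw : w ∈ ball (0 : ℂ) 1) :
    |Real.artanh (Real.tan (F z).re) - Real.artanh (Real.tan (F w).re)| ≤
      Real.artanh (pseudohyperbolicDist z w) := by
  have hdiff : DifferentiableOn ℂ (fun ζ ↦ Complex.tan (F ζ)) (ball 0 1) := fun ζ hζ ↦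
    (Complex.differentiableAt_tan.2 (cos_ne_zero_of_abs_re_lt
      ((hre ζ hζ).trans (by linarith [Real.pi_pos])))).comp_differentiableWithinAt ζ (hF ζ hζ)
  have hmaps : MapsTo (fun ζ ↦ Complex.tan (F ζ)) (ball 0 1) (ball 0 1) := fun ζ hζ ↦
    mem_ball_zero_iff.2 (norm_tan_lt_one (hre ζ hζ))
  rw [abs_artanh_sub_artanh (tan_mem_Ioo_neg_one_one (hre z hz))
    (tan_mem_Ioo_neg_one_one (hre w hw)), Complex.ofReal_tan, Complex.ofReal_tan]
  have hdist := pseudohyperbolicDist_mem_Ico (mem_ball_zero_iff.1 hz) (mem_ball_zero_iff.1 hw)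
  refine Real.artanh_le_artanh ?_ hdist.2 ?_
  · exact neg_one_lt_zero.trans_le (div_nonneg (norm_nonneg _) (norm_nonneg _))
  · exact (pseudohyperbolicDist_tan_re_le (hre z hz) (hre w hw)).trans
      (pseudohyperbolicDist_le_of_mapsTo_ball hdiff hmaps hz hw)

theorem abs_artanh_tan_sub_artanh_tan_le_of_harmonicOnNhd {f : ℂ → ℝ}
    (hf : HarmonicOnNhd f (ball 0 1)) (hf_range : ∀ z ∈ ball (0 : ℂ) 1, f z ∈ Ioo (-1 : ℝ) 1)
    (hz : z ∈ ball (0 : ℂ) 1) (hw : w ∈ ball (0 : ℂ) 1) :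
    |Real.artanh (Real.tan (π / 4 * f z)) - Real.artanh (Real.tan (π / 4 * f w))| ≤
      Real.artanh (pseudohyperbolicDist z w) := by
  obtain ⟨F, hF, hFf⟩ := hf.exists_analyticOnNhd_ball_re_eq
  have hre (ζ : ℂ) (hζ : ζ ∈ ball (0 : ℂ) 1) : ((π / 4 : ℝ) * F ζ).re = π / 4 * f ζ := by
    rw [Complex.re_ofReal_mul, ← hFf hζ]
  have hstrip (ζ : ℂ) (hζ : ζ ∈ ball (0 : ℂ) 1) : |((π / 4 : ℝ) * F ζ).re| < π / 4 := by
    rw [hre ζ hζ]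
    exact abs_pi_div_four_mul_lt (hf_range ζ hζ)
  simpa only [hre z hz, hre w hw] using abs_artanh_tan_re_sub_artanh_tan_re_le
    (hF.differentiableOn.const_mul _) hstrip hz hw

end SchwarzPick

lemma harmonicOnNhd_of_fderiv_fderiv_add_eq_zero {E : Type*} [NormedAddCommGroup E]
    [NormedSpace ℝ E] {f : ℂ → E} {s : Set ℂ} (hs : IsOpen s) (hf : ContDiffOn ℝ 2 f s)
    (hlaplace : ∀ z ∈ s, fderiv ℝ (fun w ↦ fderiv ℝ f w 1) z 1 +
      fderiv ℝ (fun w ↦ fderiv ℝ f w Complex.I) z Complex.I = 0) :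
    HarmonicOnNhd f s := by
  intro x hx
  refine ⟨hf.contDiffAt (hs.mem_nhds hx), ?_⟩
  filter_upwards [hs.mem_nhds hx] with z hz
  have hfderiv : DifferentiableAt ℝ (fderiv ℝ f) z :=
    ((hf.contDiffAt (hs.mem_nhds hz)).fderiv_right (m := 1) (by norm_num)).differentiableAt
      one_ne_zero
  have hsecond (v : ℂ) :
      fderiv ℝ (fun w ↦ fderiv ℝ f w v) z v = fderiv ℝ (fderiv ℝ f) z v v := by
    rw [fderiv_clm_apply hfderiv (differentiableAt_const v)]
    simp
  simpa [laplacian_eq_iteratedFDeriv_complexPlane, iteratedFDeriv_two_apply, hsecond]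
    using hlaplace z hz

lemma artanh_eq_real_artanh {t : ℝ} (ht : t ∈ Icc (-1) 1) : _root_.artanh t = Real.artanh t :=
  (Real.artanh_eq_half_log ht).symm

/-- **Hyperbolic Schwarz–Pick lemma for real harmonic functions**
(Kalaj–Vuorinen, Theorem 3). A harmonic function of the unit disk into `(-1, 1)`
decreases hyperbolic distances up to the factor `4/π`:
`d_h(f(z), f(w)) ≤ (4/π) d_h(z, w)`. -/
theorem harmonic_hyperbolic_contraction
    (f : ℂ → ℝ)
    (hf_smooth : ContDiffOn ℝ 2 f (ball (0 : ℂ) 1))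
    (hf_harm : ∀ z ∈ ball (0 : ℂ) 1,
      fderiv ℝ (fun w => fderiv ℝ f w 1) z 1
        + fderiv ℝ (fun w => fderiv ℝ f w Complex.I) z Complex.I = 0)
    (hf_range : ∀ z ∈ ball (0 : ℂ) 1, f z ∈ Set.Ioo (-1 : ℝ) 1) :
    ∀ z ∈ ball (0 : ℂ) 1, ∀ w ∈ ball (0 : ℂ) 1,
      |_root_.artanh (f z) - _root_.artanh (f w)|
        ≤ (4 / π) * _root_.artanh (‖z - w‖ / ‖1 - z * (starRingEnd ℂ) w‖) := by
  intro z hz w hw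
  have hf : HarmonicOnNhd f (ball 0 1) :=
    harmonicOnNhd_of_fderiv_fderiv_add_eq_zero isOpen_ball hf_smooth hf_harm
  have hdist := pseudohyperbolicDist_mem_Ico (mem_ball_zero_iff.1 hz) (mem_ball_zero_iff.1 hw)
  rw [← pseudohyperbolicDist, artanh_eq_real_artanh (Ioo_subset_Icc_self (hf_range z hz)),
    artanh_eq_real_artanh (Ioo_subset_Icc_self (hf_range w hw)),
    artanh_eq_real_artanh ⟨neg_one_lt_zero.le.trans hdist.1, hdist.2.le⟩]
  calc |Real.artanh (f z) - Real.artanh (f w)|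
      ≤ 4 / π * |Real.artanh (Real.tan (π / 4 * f z)) - Real.artanh (Real.tan (π / 4 * f w))| :=
        abs_artanh_sub_artanh_le (hf_range z hz) (hf_range w hw)
    _ ≤ 4 / π * Real.artanh (pseudohyperbolicDist z w) := by
        gcongr
        exact abs_artanh_tan_sub_artanh_tan_le_of_harmonicOnNhd hf hf_range hz hw
end
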